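/- Let A ∈ ℝ^{n×n}, B ∈ ℝ^{n×m} with (A,B) stabilizable and all eigenvalues of A in the closed unit disc. For ε > 0 let P_ε be the unique positive definite solution of the discrete algebraic Riccati equation AᵀP A − P − AᵀP B (I + BᵀP B)^{−1} BᵀP A + εI = 0, and let K_ε := (I + BᵀP_ε B)^{−1} BᵀP_ε A. Then for every ρ > 1/2 there exists ε* > 0 such that for all ε ∈ (0, ε*] the matrix A − ρ B K_ε is Schur stable. -/

import Mathlib

open Matrix Filter Topology Kronecker
open scoped Classical

noncomputable section

/-- A complex square matrix is Schur stable if all its eigenvalues lie in the open unit disc. -/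
def SchurStableC {ι : Type*} [Fintype ι] [DecidableEq ι] (M : Matrix ι ι ℂ) : Prop :=
  ∀ μ ∈ spectrum ℂ M, ‖μ‖ < 1

/-- A real square matrix is Schur stable if all its (complex) eigenvalues lie in the open
unit disc. -/
def SchurStable {ι : Type*} [Fintype ι] [DecidableEq ι] (M : Matrix ι ι ℝ) : Prop :=
  SchurStableC (M.map Complex.ofReal)

/-- All eigenvalues of a real square matrix lie in the closed unit disc. -/
def EigInClosedUnitDisc {ι : Type*} [Fintype ι] [DecidableEq ι] (M : Matrix ι ι ℝ) : Prop :=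
  ∀ μ ∈ spectrum ℂ (M.map Complex.ofReal), ‖μ‖ ≤ 1

/-- The pair (A,B) is stabilizable. -/
def Stabilizable {n m : ℕ} (A : Matrix (Fin n) (Fin n) ℝ) (B : Matrix (Fin n) (Fin m) ℝ) : Prop :=
  ∃ K : Matrix (Fin m) (Fin n) ℝ, SchurStable (A - B * K)

/-- The pair (C,A) is detectable. -/
def Detectable {n q : ℕ} (C : Matrix (Fin q) (Fin n) ℝ) (A : Matrix (Fin n) (Fin n) ℝ) : Prop :=
  ∃ F : Matrix (Fin n) (Fin q) ℝ, SchurStable (A - F * C)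

/-- `P` is a positive definite solution of the discrete algebraic Riccati equation
`AᵀPA − P − AᵀPB(I + BᵀPB)⁻¹BᵀPA + εI = 0`. -/
def IsDARESol {n m : ℕ} (A : Matrix (Fin n) (Fin n) ℝ) (B : Matrix (Fin n) (Fin m) ℝ)
    (ε : ℝ) (P : Matrix (Fin n) (Fin n) ℝ) : Prop :=
  P.PosDef ∧
    Aᵀ * P * A - P - Aᵀ * P * B * (1 + Bᵀ * P * B)⁻¹ * (Bᵀ * P * A)
      + ε • (1 : Matrix (Fin n) (Fin n) ℝ) = 0

/-- The low-gain feedback `K = (I + BᵀPB)⁻¹BᵀPA`. -/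
def gainK {n m : ℕ} (A : Matrix (Fin n) (Fin n) ℝ) (B : Matrix (Fin n) (Fin m) ℝ)
    (P : Matrix (Fin n) (Fin n) ℝ) : Matrix (Fin m) (Fin n) ℝ :=
  (1 + Bᵀ * P * B)⁻¹ * (Bᵀ * P * A)

/-- `ω_max`: zero if `A` is Schur stable, otherwise the largest `ω ∈ [0,π]` with
`det(e^{iω}I − A) = 0`. -/
def omegaMax {n : ℕ} (A : Matrix (Fin n) (Fin n) ℝ) : ℝ :=
  if SchurStable A then 0
  else sSup {ω : ℝ | ω ∈ Set.Icc 0 Real.pi ∧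
    (Complex.exp (ω * Complex.I) • (1 : Matrix (Fin n) (Fin n) ℂ)
      - A.map Complex.ofReal).det = 0}

/-- In-degree `d_in(i) = Σ_j a_{ij}`. -/
def dIn {N : ℕ} (a : Fin N → Fin N → ℝ) (i : Fin N) : ℝ := ∑ j, a i j

/-- The Laplacian matrix of the weights `a`. -/
def lapL {N : ℕ} (a : Fin N → Fin N → ℝ) : Matrix (Fin N) (Fin N) ℝ :=
  Matrix.of fun i j => if i = j then dIn a i else -a i j

/-- The expanded Laplacian `L̄ = L + diag(ι)`. -/
def lapLbar {N : ℕ} (a : Fin N → Fin N → ℝ) (ι : Fin N → ℝ) : Matrix (Fin N) (Fin N) ℝ :=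
  lapL a + Matrix.diagonal ι

/-- `D̄ = I − (2I + D_in)⁻¹ L̄`. -/
def DbarM {N : ℕ} (a : Fin N → Fin N → ℝ) (ι : Fin N → ℝ) : Matrix (Fin N) (Fin N) ℝ :=
  1 - ((2 : ℝ) • (1 : Matrix (Fin N) (Fin N) ℝ) + Matrix.diagonal (dIn a))⁻¹ * lapLbar a ι

/-!
Completing the square in the Riccati equation turns the closed loop `G = A - ρBK` into a Lyapunov
decay `P - GᴴPG = Q + Kᴴ((2ρ - 1)I - (1 - ρ)²BᴴPB)K`, whose right-hand side is positive definite as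
soon as `P` is small. It remains to see that `P → 0` as the state weight `Q → 0`.

A stabilizing feedback `F` bounds `P` above by the cost of running `F`, so the solutions stay in a
compact set, and a limit point `P` is a positive semidefinite fixed point of the Riccati operator.
If `P ≠ 0`, then for the optimal gain `K` the matrix `A - BK` preserves `ker P`, and an eigenvector
of the map it induces modulo `ker P` yields `w ≠ 0` and `c` with `c • Aᴴw = w`. As the spectrum of
`A` is in the closed disc, `‖c‖ ≥ 1`, and the energy balance `P - (A - BK)ᴴP(A - BK) = KᴴK` then
forces `‖c‖ = 1` and `Bᴴw = 0`: a unimodular mode of `A` that no feedback can move.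
-/

open scoped ComplexOrder MatrixOrder

section ConjugationInequality

lemma le_star_pow_mul_mul_pow_add_sum {R : Type*} [Ring R] [PartialOrder R] [StarRing R]
    [StarOrderedRing R] {p r g : R} (h : p ≤ star g * p * g + r) (N : ℕ) :
    p ≤ star (g ^ N) * p * g ^ N + ∑ j ∈ Finset.range N, star (g ^ j) * r * g ^ j := by
  induction N with
  | zero => simp
  | succ N ih =>
    refine ih.trans ?_
    rw [Finset.sum_range_succ, ← add_assoc, add_right_comm]
    refine add_le_add_left ?_ _
    calc star (g ^ N) * p * g ^ N ≤ star (g ^ N) * (star g * p * g + r) * g ^ N :=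
          star_left_conjugate_le_conjugate h _
      _ = star (g ^ (N + 1)) * p * g ^ (N + 1) + star (g ^ N) * r * g ^ N := by
          rw [pow_succ', star_mul]
          noncomm_ring

lemma exists_norm_pow_lt_one_of_forall_mem_spectrum {R : Type*} [NormedRing R] [NormedAlgebra ℂ R]
    [CompleteSpace R] {a : R} (ha : ∀ μ ∈ spectrum ℂ a, ‖μ‖ < 1) : ∃ N : ℕ, ‖a ^ N‖ < 1 := by
  rcases subsingleton_or_nontrivial R with _ | _
  · exact ⟨0, by simp [Subsingleton.elim (1 : R) 0]⟩
  have hr : spectralRadius ℂ a < 1 := by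
    exact_mod_cast spectrum.spectralRadius_lt_of_forall_lt (r := 1) a
      fun μ hμ => by exact_mod_cast ha μ hμ
  obtain ⟨N, hN, hN0⟩ :=
    (((spectrum.pow_norm_pow_one_div_tendsto_nhds_spectralRadius a).eventually
      (gt_mem_nhds hr)).and (eventually_gt_atTop 0)).exists
  refine ⟨N, not_le.1 fun h => hN.not_ge ?_⟩
  exact ENNReal.one_le_ofReal.2 (Real.one_le_rpow h (by positivity))

variable {R : Type*} [CStarAlgebra R] [PartialOrder R] [StarOrderedRing R]

lemma exists_forall_norm_le_of_le_star_mul_mul_add {g : R} (hg : ∀ μ ∈ spectrum ℂ g, ‖μ‖ < 1)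
    (r : R) : ∃ C, ∀ p, 0 ≤ p → p ≤ star g * p * g + r → ‖p‖ ≤ C := by
  obtain ⟨N, hN⟩ := exists_norm_pow_lt_one_of_forall_mem_spectrum hg
  set s := ∑ j ∈ Finset.range N, star (g ^ j) * r * g ^ j
  have hpos : 0 < 1 - ‖g ^ N‖ ^ 2 := by nlinarith [norm_nonneg (g ^ N)]
  refine ⟨‖s‖ / (1 - ‖g ^ N‖ ^ 2), fun p hp h => ?_⟩
  have hle : ‖p‖ ≤ ‖g ^ N‖ ^ 2 * ‖p‖ + ‖s‖ :=
    calc ‖p‖ ≤ ‖star (g ^ N) * p * g ^ N + s‖ :=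
          CStarAlgebra.norm_le_norm_of_nonneg_of_le hp (le_star_pow_mul_mul_pow_add_sum h N)
      _ ≤ ‖star (g ^ N)‖ * ‖p‖ * ‖g ^ N‖ + ‖s‖ :=
          (norm_add_le _ _).trans (add_le_add_left (norm_mul₃_le) _)
      _ = ‖g ^ N‖ ^ 2 * ‖p‖ + ‖s‖ := by rw [norm_star]; ring
  rw [le_div_iff₀ hpos]
  linarith

lemma eventually_le_algebraMap_of_tendsto_zero {ι : Type*} {l : Filter ι} {f : ι → R}
    (hf : Tendsto f l (𝓝 0)) (hsa : ∀ᶠ i in l, IsSelfAdjoint (f i)) {c : ℝ} (hc : 0 < c) :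
    ∀ᶠ i in l, f i ≤ algebraMap ℝ R c := by
  have hnorm : ∀ᶠ i in l, ‖f i‖ < c := by
    simpa using hf.norm.eventually (gt_mem_nhds (by simpa using hc))
  filter_upwards [hnorm, hsa] with i hi hsa
  exact hsa.le_algebraMap_norm_self.trans (algebraMap_mono R hi.le)

end ConjugationInequality

section Spectrum

lemma exists_apply_ne_zero_and_apply_eq_smul {K V W : Type*} [Field K] [IsAlgClosed K]
    [AddCommGroup V] [Module K V] [FiniteDimensional K V] [AddCommGroup W] [Module K W]
    {T : V →ₗ[K] V} {f : V →ₗ[K] W} (hf : f ≠ 0)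
    (hT : LinearMap.ker f ≤ (LinearMap.ker f).comap T) :
    ∃ (c : K) (v : V), f v ≠ 0 ∧ f (T v) = c • f v := by
  -- `T` descends to `V ⧸ ker f`, where it has an eigenvector.
  have : Nontrivial (V ⧸ LinearMap.ker f) :=
    Submodule.Quotient.nontrivial_iff.2 (mt LinearMap.ker_eq_top.1 hf)
  obtain ⟨c, hc⟩ := Module.End.exists_eigenvalue ((LinearMap.ker f).mapQ _ T hT)
  obtain ⟨q, hq⟩ := hc.exists_hasEigenvector
  obtain ⟨v, rfl⟩ := Submodule.Quotient.mk_surjective _ q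
  refine ⟨c, v, fun h => hq.2 ((Submodule.Quotient.mk_eq_zero _).2 h), ?_⟩
  have hv := hq.apply_eq_smul
  rw [Submodule.mapQ_apply, ← Submodule.Quotient.mk_smul, Submodule.Quotient.eq,
    LinearMap.mem_ker, map_sub, map_smul, sub_eq_zero] at hv
  exact hv

lemma star_mulVec_dotProduct {R m n : Type*} [CommSemiring R] [StarRing R] [Fintype m] [Fintype n]
    (M : Matrix m n R) (x : n → R) (y : m → R) :
    star (M *ᵥ x) ⬝ᵥ y = star x ⬝ᵥ Mᴴ *ᵥ y := by
  rw [Matrix.star_mulVec, Matrix.dotProduct_mulVec]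

variable {n : Type*} [Fintype n]

lemma dotProduct_conjTranspose_mul_mul_mulVec_of_mulVec_eq_smul {R : Type*} [CommRing R]
    [StarRing R] {P G : Matrix n n R} (hP : P.IsHermitian) {c : R} {v : n → R}
    (h : P *ᵥ (G *ᵥ v) = c • P *ᵥ v) :
    star v ⬝ᵥ (Gᴴ * P * G) *ᵥ v = star c * c * (star v ⬝ᵥ P *ᵥ v) := by
  calc star v ⬝ᵥ (Gᴴ * P * G) *ᵥ v = star (G *ᵥ v) ⬝ᵥ P *ᵥ (G *ᵥ v) := by
        rw [star_mulVec_dotProduct, Matrix.mulVec_mulVec, Matrix.mulVec_mulVec, Matrix.mul_assoc]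
    _ = c * (star v ⬝ᵥ Gᴴ *ᵥ (P *ᵥ v)) := by
        rw [h, dotProduct_smul, star_mulVec_dotProduct, smul_eq_mul]
    _ = c * (star (P *ᵥ (G *ᵥ v)) ⬝ᵥ v) := by
        rw [← star_mulVec_dotProduct, star_mulVec_dotProduct P, hP.eq]
    _ = star c * c * (star v ⬝ᵥ P *ᵥ v) := by
        rw [h, star_smul, smul_dotProduct, star_mulVec_dotProduct, hP.eq, smul_eq_mul]
        ring

variable [DecidableEq n]

lemma mem_spectrum_iff_exists_mulVec_eq_smul {K : Type*} [Field K] {M : Matrix n n K} {μ : K} :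
    μ ∈ spectrum K M ↔ ∃ v ≠ 0, M *ᵥ v = μ • v := by
  rw [← Matrix.spectrum_toLin', ← Module.End.hasEigenvalue_iff_mem_spectrum]
  refine ⟨fun h => ?_, fun ⟨v, hv, h⟩ =>
    Module.End.hasEigenvalue_of_hasEigenvector ⟨Module.End.mem_eigenspace_iff.2 h, hv⟩⟩
  obtain ⟨v, hv⟩ := h.exists_hasEigenvector
  exact ⟨v, hv.2, hv.apply_eq_smul⟩

lemma star_mem_spectrum_of_conjTranspose_mulVec_eq_smul {K : Type*} [Field K] [StarRing K]
    {M : Matrix n n K} {μ : K} {v : n → K} (hv : v ≠ 0) (h : Mᴴ *ᵥ v = μ • v) :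
    star μ ∈ spectrum K M := by
  have hμ : μ ∈ spectrum K (star M) := mem_spectrum_iff_exists_mulVec_eq_smul.2 ⟨v, hv, h⟩
  rwa [spectrum.map_star] at hμ

lemma norm_lt_one_of_conjTranspose_mulVec_eq_smul {m : Type*} [Fintype m] {A : Matrix n n ℂ}
    {B : Matrix n m ℂ} {F : Matrix m n ℂ} (hF : SchurStableC (A - B * F)) {μ : ℂ} {w : n → ℂ}
    (hw : w ≠ 0) (hA : Aᴴ *ᵥ w = μ • w) (hB : Bᴴ *ᵥ w = 0) : ‖μ‖ < 1 := by
  have hAF : (A - B * F)ᴴ *ᵥ w = μ • w := by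
    rw [Matrix.conjTranspose_sub, Matrix.conjTranspose_mul, Matrix.sub_mulVec,
      ← Matrix.mulVec_mulVec, hB, Matrix.mulVec_zero, sub_zero, hA]
  simpa using hF _ (star_mem_spectrum_of_conjTranspose_mulVec_eq_smul hw hAF)

end Spectrum

section Lyapunov

variable {𝕜 n : Type*} [RCLike 𝕜] [Fintype n] {P G : Matrix n n 𝕜}

lemma dotProduct_sub_conjTranspose_mul_mul_mulVec (hP : P.IsHermitian) {c : 𝕜} {v : n → 𝕜}
    (h : P *ᵥ (G *ᵥ v) = c • P *ᵥ v) :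
    star v ⬝ᵥ (P - Gᴴ * P * G) *ᵥ v = (1 - ‖c‖ ^ 2) • (star v ⬝ᵥ P *ᵥ v) := by
  rw [Matrix.sub_mulVec, dotProduct_sub, dotProduct_conjTranspose_mul_mul_mulVec_of_mulVec_eq_smul
    hP h, RCLike.star_def, RCLike.conj_mul, ← one_sub_mul, RCLike.real_smul_eq_coe_mul]
  push_cast
  rfl

lemma mulVec_mulVec_eq_zero_of_conjTranspose_mul_mul_le (hP : P.PosSemidef)
    (h : Gᴴ * P * G ≤ P) {v : n → 𝕜} (hv : P *ᵥ v = 0) : P *ᵥ (G *ᵥ v) = 0 := by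
  have hquad : star v ⬝ᵥ (Gᴴ * P * G) *ᵥ v = star (G *ᵥ v) ⬝ᵥ P *ᵥ (G *ᵥ v) := by
    rw [star_mulVec_dotProduct, Matrix.mulVec_mulVec, Matrix.mulVec_mulVec, Matrix.mul_assoc]
  have hle := (Matrix.le_iff.1 h).dotProduct_mulVec_nonneg v
  rw [Matrix.sub_mulVec, hv, zero_sub, dotProduct_neg, hquad, neg_nonneg] at hle
  exact (hP.dotProduct_mulVec_zero_iff _).1 (hle.antisymm (hP.dotProduct_mulVec_nonneg _))

lemma exists_mulVec_ne_zero_and_mulVec_mulVec_eq_smul [IsAlgClosed 𝕜] (hP : P.PosSemidef)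
    (h : Gᴴ * P * G ≤ P) (hP0 : P ≠ 0) :
    ∃ (c : 𝕜) (v : n → 𝕜), P *ᵥ v ≠ 0 ∧ P *ᵥ (G *ᵥ v) = c • P *ᵥ v :=
  exists_apply_ne_zero_and_apply_eq_smul (T := G.mulVecLin) (f := P.mulVecLin)
    (fun h0 => hP0 <| Matrix.mulVec_injective <| funext fun x => by
      simpa using LinearMap.congr_fun h0 x)
    fun _ hv => mulVec_mulVec_eq_zero_of_conjTranspose_mul_mul_le hP h hv

lemma norm_eq_one_and_mulVec_eq_zero_of_one_le_norm {m : Type*} [Fintype m] {K : Matrix m n 𝕜}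
    (hP : P.PosSemidef) (h : P - Gᴴ * P * G = Kᴴ * K) {c : 𝕜} {v : n → 𝕜} (hv : P *ᵥ v ≠ 0)
    (hc : P *ᵥ (G *ᵥ v) = c • P *ᵥ v) (hc1 : 1 ≤ ‖c‖) : ‖c‖ = 1 ∧ K *ᵥ v = 0 := by
  have hKv : star (K *ᵥ v) ⬝ᵥ K *ᵥ v = (1 - ‖c‖ ^ 2) • (star v ⬝ᵥ P *ᵥ v) := by
    rw [← dotProduct_sub_conjTranspose_mul_mul_mulVec hP.isHermitian hc, h,
      star_mulVec_dotProduct, Matrix.mulVec_mulVec]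
  have hKv0 : star (K *ᵥ v) ⬝ᵥ K *ᵥ v = 0 := by
    refine le_antisymm (hKv.trans_le ?_) (dotProduct_star_self_nonneg _)
    exact smul_nonpos_of_nonpos_of_nonneg (sub_nonpos.2 (one_le_pow₀ hc1))
      (hP.dotProduct_mulVec_nonneg v)
  refine ⟨?_, dotProduct_star_self_eq_zero.1 hKv0⟩
  have hsq := (smul_eq_zero.1 (hKv.symm.trans hKv0)).resolve_right
    (mt (hP.dotProduct_mulVec_zero_iff v).1 hv)
  exact (pow_eq_one_iff_of_nonneg (norm_nonneg c) two_ne_zero).1 (sub_eq_zero.1 hsq).symm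

lemma schurStableC_of_posDef_sub [DecidableEq n] {P G : Matrix n n ℂ} (hP : P.PosSemidef)
    (h : (P - Gᴴ * P * G).PosDef) : SchurStableC G := by
  intro μ hμ
  obtain ⟨v, hv, hGv⟩ := mem_spectrum_iff_exists_mulVec_eq_smul.1 hμ
  have hpos := h.re_dotProduct_pos hv
  rw [dotProduct_sub_conjTranspose_mul_mul_mulVec hP.isHermitian (c := μ)
    (by rw [hGv, Matrix.mulVec_smul]), RCLike.smul_re] at hpos
  nlinarith [pos_of_mul_pos_left hpos (hP.re_dotProduct_nonneg v), norm_nonneg μ]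

end Lyapunov

lemma continuousAt_matrix_mul {X R l m n : Type*} [TopologicalSpace X] [Fintype m]
    [TopologicalSpace R] [NonUnitalNonAssocSemiring R] [IsTopologicalSemiring R]
    {f : X → Matrix l m R} {g : X → Matrix m n R} {x : X} (hf : ContinuousAt f x)
    (hg : ContinuousAt g x) :
    ContinuousAt (fun y => f y * g y) x :=
  ContinuousAt.comp (f := fun y => (f y, g y))
    (g := fun M : Matrix l m R × Matrix m n R => M.1 * M.2)
    (continuous_fst.matrix_mul continuous_snd).continuousAt (hf.prodMk hg)

section Riccati

variable {𝕜 m n : Type*} [RCLike 𝕜] [Fintype m] [DecidableEq m] [Fintype n]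

/-- The gain of the linear-quadratic optimal feedback `u = -Kx` for the dynamics `x ↦ Ax + Bu` with
terminal cost `P` and unit input weight. It is `gainK` for matrices over `𝕜`. -/
def riccatiGain (A : Matrix n n 𝕜) (B : Matrix n m 𝕜) (P : Matrix n n 𝕜) : Matrix m n 𝕜 :=
  (1 + Bᴴ * P * B)⁻¹ * (Bᴴ * P * A)

/-- The Riccati operator `P ↦ AᴴPA - AᴴPB(I + BᴴPB)⁻¹BᴴPA` without state weight, factored through
the closed loop `A - BK` of the gain `K = riccatiGain A B P`. -/
def riccatiMap (A : Matrix n n 𝕜) (B : Matrix n m 𝕜) (P : Matrix n n 𝕜) : Matrix n n 𝕜 :=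
  Aᴴ * P * (A - B * riccatiGain A B P)

/-- The Hermitian form of the one-step cost `‖u‖² + (x⁺)ᴴPx⁺` of the feedback `u = -Fx`. The Riccati
operator is its minimum over `F`. -/
def feedbackCost (A : Matrix n n 𝕜) (B : Matrix n m 𝕜) (F : Matrix m n 𝕜) (P : Matrix n n 𝕜) :
    Matrix n n 𝕜 :=
  (A - B * F)ᴴ * P * (A - B * F) + Fᴴ * F

/-- `P` solves the discrete algebraic Riccati equation with state weight `Q` and unit input weight.
Only semidefiniteness of `P` is demanded, so that solutions are closed under limits. -/
structure IsRiccatiSolution (A : Matrix n n 𝕜) (B : Matrix n m 𝕜) (Q P : Matrix n n 𝕜) :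
    Prop where
  posSemidef : P.PosSemidef
  riccatiMap_add : riccatiMap A B P + Q = P

variable {A : Matrix n n 𝕜} {B : Matrix n m 𝕜} {P : Matrix n n 𝕜}

lemma posDef_one_add_conjTranspose_mul_mul (hP : P.PosSemidef) (B : Matrix n m 𝕜) :
    (1 + Bᴴ * P * B).PosDef :=
  Matrix.PosDef.one.add_posSemidef (hP.conjTranspose_mul_mul_same B)

lemma one_add_mul_riccatiGain (hP : P.PosSemidef) :
    (1 + Bᴴ * P * B) * riccatiGain A B P = Bᴴ * P * A :=
  Matrix.mul_nonsing_inv_cancel_left _ _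
    ((Matrix.isUnit_iff_isUnit_det _).1 (posDef_one_add_conjTranspose_mul_mul hP B).isUnit)

lemma conjTranspose_mul_mul_sub_mul_riccatiGain (hP : P.PosSemidef) :
    Bᴴ * P * (A - B * riccatiGain A B P) = riccatiGain A B P := by
  rw [Matrix.mul_sub, ← one_add_mul_riccatiGain hP, Matrix.add_mul, Matrix.one_mul,
    ← Matrix.mul_assoc, add_sub_cancel_right]

lemma feedbackCost_eq_riccatiMap_add (hP : P.PosSemidef) (F : Matrix m n 𝕜) :
    feedbackCost A B F P = riccatiMap A B P +
      (F - riccatiGain A B P)ᴴ * (1 + Bᴴ * P * B) * (F - riccatiGain A B P) := by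
  have hSK := one_add_mul_riccatiGain (A := A) (B := B) hP
  have hKS : (riccatiGain A B P)ᴴ * (1 + Bᴴ * P * B) = Aᴴ * P * B := by
    simpa [Matrix.mul_assoc, hP.isHermitian.eq] using congrArg Matrix.conjTranspose hSK
  rw [feedbackCost, riccatiMap]
  set K := riccatiGain A B P
  have hsq : (F - K)ᴴ * (1 + Bᴴ * P * B) * (F - K) =
      Fᴴ * F + Fᴴ * (Bᴴ * P * B) * F - Fᴴ * (Bᴴ * P * A) - Aᴴ * P * B * F + Aᴴ * P * B * K := by
    rw [Matrix.conjTranspose_sub, Matrix.sub_mul, hKS, ← hSK]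
    simp only [Matrix.mul_sub, Matrix.sub_mul, Matrix.mul_add, Matrix.add_mul, Matrix.one_mul,
      Matrix.mul_one, Matrix.mul_assoc]
    abel
  rw [hsq]
  simp only [Matrix.conjTranspose_sub, Matrix.conjTranspose_mul, Matrix.mul_sub, Matrix.sub_mul,
    Matrix.mul_assoc]
  abel

lemma riccatiMap_eq_feedbackCost (hP : P.PosSemidef) :
    riccatiMap A B P = feedbackCost A B (riccatiGain A B P) P := by
  simp [feedbackCost_eq_riccatiMap_add hP]

lemma riccatiMap_le_feedbackCost (hP : P.PosSemidef) (F : Matrix m n 𝕜) :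
    riccatiMap A B P ≤ feedbackCost A B F P := by
  rw [feedbackCost_eq_riccatiMap_add hP, Matrix.le_iff, add_sub_cancel_left]
  exact (posDef_one_add_conjTranspose_mul_mul hP B).posSemidef.conjTranspose_mul_mul_same _

lemma riccatiMap_sub_conjTranspose_mul_mul (hP : P.PosSemidef) (ρ : ℝ) :
    riccatiMap A B P - (A - ρ • (B * riccatiGain A B P))ᴴ * P * (A - ρ • (B * riccatiGain A B P)) =
      (riccatiGain A B P)ᴴ * ((2 * ρ - 1) • 1 - (1 - ρ) ^ 2 • (Bᴴ * P * B)) *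
        riccatiGain A B P := by
  have hcost := feedbackCost_eq_riccatiMap_add (A := A) (B := B) hP (ρ • riccatiGain A B P)
  set K := riccatiGain A B P
  have hK : ρ • K - K = (ρ - 1) • K := by rw [sub_smul, one_smul]
  rw [feedbackCost, Matrix.mul_smul, hK] at hcost
  have hexp : Kᴴ * ((2 * ρ - 1) • 1 - (1 - ρ) ^ 2 • (Bᴴ * P * B)) * K =
      (ρ • K)ᴴ * (ρ • K) - ((ρ - 1) • K)ᴴ * (1 + Bᴴ * P * B) * ((ρ - 1) • K) := by
    simp only [Matrix.conjTranspose_smul, star_trivial, Matrix.mul_smul, Matrix.smul_mul,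
      Matrix.mul_add, Matrix.add_mul, Matrix.mul_sub, Matrix.sub_mul, Matrix.mul_one]
    module
  rw [hexp, sub_eq_sub_iff_add_eq_add, ← hcost, add_comm]

lemma continuousAt_riccatiGain (hP : P.PosSemidef) : ContinuousAt (riccatiGain A B) P := by
  have hdet : (1 + Bᴴ * P * B).det ≠ 0 := ((Matrix.isUnit_iff_isUnit_det _).1
    (posDef_one_add_conjTranspose_mul_mul hP B).isUnit).ne_zero
  have hinv : ContinuousAt Inv.inv (1 + Bᴴ * P * B) :=
    continuousAt_matrix_inv _ (NormedRing.inverse_continuousAt (Units.mk0 _ hdet))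
  have hS : Continuous fun X : Matrix n n 𝕜 => 1 + Bᴴ * X * B := by fun_prop
  have hR : Continuous fun X : Matrix n n 𝕜 => Bᴴ * X * A := by fun_prop
  exact continuousAt_matrix_mul (hinv.comp_of_eq hS.continuousAt rfl) hR.continuousAt

lemma continuousAt_riccatiMap (hP : P.PosSemidef) : ContinuousAt (riccatiMap A B) P := by
  have hS : Continuous fun X : Matrix n n 𝕜 => Aᴴ * X := by fun_prop
  have hR : Continuous fun X : Matrix m n 𝕜 => A - B * X := by fun_prop
  exact continuousAt_matrix_mul hS.continuousAt
    (hR.continuousAt.comp (continuousAt_riccatiGain hP))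

lemma IsRiccatiSolution.isHermitian_weight {Q : Matrix n n 𝕜} (h : IsRiccatiSolution A B Q P) :
    Q.IsHermitian := by
  rw [eq_sub_of_add_eq' h.riccatiMap_add, riccatiMap_eq_feedbackCost h.posSemidef, feedbackCost]
  exact h.posSemidef.isHermitian.sub
    ((Matrix.isHermitian_conjTranspose_mul_mul _ h.posSemidef.isHermitian).add
      (Matrix.isHermitian_conjTranspose_mul_self _))

lemma conjTranspose_mul_mul_le_riccatiMap (hP : P.PosSemidef) :
    (A - B * riccatiGain A B P)ᴴ * P * (A - B * riccatiGain A B P) ≤ riccatiMap A B P := by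
  rw [riccatiMap_eq_feedbackCost hP, feedbackCost, Matrix.le_iff, add_sub_cancel_left]
  exact Matrix.posSemidef_conjTranspose_mul_self _

end Riccati

section ZeroWeight

variable {m n : Type*} [Fintype m] [DecidableEq m] [Fintype n] [DecidableEq n]
  {A P : Matrix n n ℂ} {B : Matrix n m ℂ}

lemma eq_zero_of_riccatiMap_eq_self {F : Matrix m n ℂ} (hA : ∀ μ ∈ spectrum ℂ A, ‖μ‖ ≤ 1)
    (hF : SchurStableC (A - B * F)) (hP : P.PosSemidef)
    (hfix : riccatiMap A B P = P) : P = 0 := by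
  by_contra hP0
  have hdecay := riccatiMap_eq_feedbackCost (A := A) (B := B) hP
  have hle := conjTranspose_mul_mul_le_riccatiMap (A := A) (B := B) hP
  have hBG := conjTranspose_mul_mul_sub_mul_riccatiGain (A := A) (B := B) hP
  have hAG : Aᴴ * P * (A - B * riccatiGain A B P) = P := hfix
  rw [hfix, feedbackCost, ← sub_eq_iff_eq_add'] at hdecay
  rw [hfix] at hle
  set K := riccatiGain A B P
  set G := A - B * K
  obtain ⟨c, v, hw, hc⟩ := exists_mulVec_ne_zero_and_mulVec_mulVec_eq_smul hP hle hP0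
  have hGw : Aᴴ *ᵥ (c • P *ᵥ v) = P *ᵥ v := by
    rw [← hc, Matrix.mulVec_mulVec, Matrix.mulVec_mulVec, hAG]
  have hKw : Bᴴ *ᵥ (c • P *ᵥ v) = K *ᵥ v := by
    rw [← hc, Matrix.mulVec_mulVec, Matrix.mulVec_mulVec, hBG]
  have hc0 : c ≠ 0 := by
    rintro rfl
    exact hw (by simpa using hGw.symm)
  have hAw : Aᴴ *ᵥ (P *ᵥ v) = c⁻¹ • P *ᵥ v := by
    rw [← inv_smul_smul₀ hc0 (Aᴴ *ᵥ (P *ᵥ v)), ← Matrix.mulVec_smul, hGw]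
  have hc1 : 1 ≤ ‖c‖ := by
    have := hA _ (star_mem_spectrum_of_conjTranspose_mulVec_eq_smul hw hAw)
    rwa [norm_star, norm_inv, inv_le_one₀ (norm_pos_iff.2 hc0)] at this
  obtain ⟨hcn, hKv⟩ := norm_eq_one_and_mulVec_eq_zero_of_one_le_norm hP hdecay hw hc hc1
  have hBw : Bᴴ *ᵥ (P *ᵥ v) = 0 := by
    rw [hKv, Matrix.mulVec_smul, smul_eq_zero] at hKw
    exact hKw.resolve_left hc0
  simpa [hcn] using norm_lt_one_of_conjTranspose_mulVec_eq_smul hF hw hAw hBw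

end ZeroWeight

section VanishingWeight

open scoped Matrix.Norms.L2Operator

variable {m n : Type*} [Fintype m] [DecidableEq m] [Fintype n] [DecidableEq n]
  {A : Matrix n n ℂ} {B : Matrix n m ℂ} {F : Matrix m n ℂ}

lemma exists_forall_norm_le_of_isRiccatiSolution (hF : SchurStableC (A - B * F)) :
    ∃ C, ∀ Q P, IsRiccatiSolution A B Q P → Q ≤ 1 → ‖P‖ ≤ C := by
  obtain ⟨C, hC⟩ := exists_forall_norm_le_of_le_star_mul_mul_add hF (Fᴴ * F + 1)
  refine ⟨C, fun Q P h hQ => hC P (Matrix.nonneg_iff_posSemidef.2 h.posSemidef) ?_⟩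
  calc P = riccatiMap A B P + Q := h.riccatiMap_add.symm
    _ ≤ feedbackCost A B F P + 1 := add_le_add (riccatiMap_le_feedbackCost h.posSemidef F) hQ
    _ = _ := add_assoc _ _ _

variable {ι : Type*} {l : Filter ι} {Q P : ι → Matrix n n ℂ}

lemma tendsto_zero_of_isRiccatiSolution (hA : ∀ μ ∈ spectrum ℂ A, ‖μ‖ ≤ 1)
    (hF : SchurStableC (A - B * F)) (hP : ∀ᶠ i in l, IsRiccatiSolution A B (Q i) (P i))
    (hQ : Tendsto Q l (𝓝 0)) : Tendsto P l (𝓝 0) := by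
  obtain ⟨C, hC⟩ := exists_forall_norm_le_of_isRiccatiSolution hF
  have hQ1 : ∀ᶠ i in l, Q i ≤ 1 := by
    simpa using eventually_le_algebraMap_of_tendsto_zero hQ
      (hP.mono fun i h => h.isHermitian_weight) one_pos
  refine (isCompact_closedBall (0 : Matrix n n ℂ) C).tendsto_nhds_of_unique_mapClusterPt
    (by filter_upwards [hP, hQ1] with i hi hi1 using by simpa using hC _ _ hi hi1) fun X _ hX => ?_
  obtain ⟨U, hU, hPX⟩ := mapClusterPt_iff_ultrafilter.1 hX
  have hXpos : X.PosSemidef := Matrix.nonneg_iff_posSemidef.1 <|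
    ge_of_tendsto hPX <| (hP.filter_mono hU).mono fun i h =>
      Matrix.nonneg_iff_posSemidef.2 h.posSemidef
  have hmap : Tendsto P U (𝓝 (riccatiMap A B X)) := by
    rw [← add_zero (riccatiMap A B X)]
    refine (((continuousAt_riccatiMap hXpos).tendsto.comp hPX).add (hQ.mono_left hU)).congr' ?_
    exact (hP.filter_mono hU).mono fun i h => h.riccatiMap_add
  exact eq_zero_of_riccatiMap_eq_self hA hF hXpos (tendsto_nhds_unique hmap hPX)

lemma IsRiccatiSolution.schurStableC_sub_smul_mul_riccatiGain {Q P : Matrix n n ℂ}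
    (h : IsRiccatiSolution A B Q P) (hQ : Q.PosDef) {ρ : ℝ}
    (hρ : (1 - ρ) ^ 2 • (Bᴴ * P * B) ≤ (2 * ρ - 1) • 1) :
    SchurStableC (A - ρ • (B * riccatiGain A B P)) := by
  refine schurStableC_of_posDef_sub h.posSemidef ?_
  have hdecay := riccatiMap_sub_conjTranspose_mul_mul (A := A) (B := B) h.posSemidef ρ
  rw [eq_sub_of_add_eq h.riccatiMap_add, sub_right_comm, sub_eq_iff_eq_add] at hdecay
  rw [hdecay]
  exact hQ.posSemidef_add ((Matrix.le_iff.1 hρ).conjTranspose_mul_mul_same _)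

theorem lowgain_closed_loop_schur_general (hA : ∀ μ ∈ spectrum ℂ A, ‖μ‖ ≤ 1)
    (hF : SchurStableC (A - B * F)) (hP : ∀ᶠ i in l, IsRiccatiSolution A B (Q i) (P i))
    (hQ : ∀ᶠ i in l, (Q i).PosDef) (hQ0 : Tendsto Q l (𝓝 0)) {ρ : ℝ} (hρ : 1 / 2 < ρ) :
    ∀ᶠ i in l, SchurStableC (A - ρ • (B * riccatiGain A B (P i))) := by
  have hcont : Continuous fun X : Matrix n n ℂ => (1 - ρ) ^ 2 • (Bᴴ * X * B) := by fun_prop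
  have hlim := (hcont.tendsto' 0 0 (by simp)).comp (tendsto_zero_of_isRiccatiSolution hA hF hP hQ0)
  have hsa : ∀ᶠ i in l, IsSelfAdjoint ((1 - ρ) ^ 2 • (Bᴴ * P i * B)) := hP.mono fun i h =>
    IsSelfAdjoint.smul (.all _)
      (Matrix.isHermitian_conjTranspose_mul_mul B h.posSemidef.isHermitian)
  filter_upwards [eventually_le_algebraMap_of_tendsto_zero hlim hsa (c := 2 * ρ - 1) (by linarith),
    hP, hQ] with i hi hPi hQi
  exact hPi.schurStableC_sub_smul_mul_riccatiGain hQi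
    (hi.trans_eq (Algebra.algebraMap_eq_smul_one _))

end VanishingWeight

section Complexification

variable {l m n : Type*}

lemma map_ofReal_mul [Fintype m] (M : Matrix l m ℝ) (N : Matrix m n ℝ) :
    (M * N).map Complex.ofReal = M.map Complex.ofReal * N.map Complex.ofReal :=
  Matrix.map_mul (f := Complex.ofRealHom)

lemma map_ofReal_add (M N : Matrix m n ℝ) :
    (M + N).map Complex.ofReal = M.map Complex.ofReal + N.map Complex.ofReal :=
  Matrix.map_add _ Complex.ofReal_add M N

lemma map_ofReal_sub (M N : Matrix m n ℝ) :
    (M - N).map Complex.ofReal = M.map Complex.ofReal - N.map Complex.ofReal :=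
  Matrix.map_sub _ Complex.ofReal_sub M N

lemma map_ofReal_smul (r : ℝ) (M : Matrix m n ℝ) :
    (r • M).map Complex.ofReal = r • M.map Complex.ofReal :=
  Matrix.map_smul _ r (fun a => by simp) M

lemma map_ofReal_conjTranspose (M : Matrix m n ℝ) :
    Mᴴ.map Complex.ofReal = (M.map Complex.ofReal)ᴴ :=
  Matrix.conjTranspose_map _ fun a => by simp

lemma map_ofReal_one [DecidableEq n] : (1 : Matrix n n ℝ).map Complex.ofReal = 1 :=
  Matrix.map_one _ Complex.ofReal_zero Complex.ofReal_one

variable [Fintype m] [DecidableEq m] [Fintype n]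

lemma map_ofReal_inv {M : Matrix m m ℝ} (hM : IsUnit M) :
    M⁻¹.map Complex.ofReal = (M.map Complex.ofReal)⁻¹ := by
  refine (Matrix.inv_eq_right_inv ?_).symm
  rw [← map_ofReal_mul, Matrix.mul_nonsing_inv _ ((Matrix.isUnit_iff_isUnit_det _).1 hM),
    map_ofReal_one]

lemma posSemidef_map_ofReal {P : Matrix n n ℝ} (hP : P.PosSemidef) :
    (P.map Complex.ofReal).PosSemidef := by
  obtain ⟨C, rfl⟩ := CStarAlgebra.nonneg_iff_eq_star_mul_self.1 (Matrix.nonneg_iff_posSemidef.2 hP)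
  rw [Matrix.star_eq_conjTranspose, map_ofReal_mul, map_ofReal_conjTranspose]
  exact Matrix.posSemidef_conjTranspose_mul_self _

variable {A Q P : Matrix n n ℝ} {B : Matrix n m ℝ}

lemma map_ofReal_riccatiGain (hP : P.PosSemidef) :
    (riccatiGain A B P).map Complex.ofReal =
      riccatiGain (A.map Complex.ofReal) (B.map Complex.ofReal) (P.map Complex.ofReal) := by
  rw [riccatiGain, riccatiGain, map_ofReal_mul,
    map_ofReal_inv (posDef_one_add_conjTranspose_mul_mul hP B).isUnit, map_ofReal_add]
  simp only [map_ofReal_mul, map_ofReal_one, map_ofReal_conjTranspose]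

lemma IsRiccatiSolution.map_ofReal (h : IsRiccatiSolution A B Q P) :
    IsRiccatiSolution (A.map Complex.ofReal) (B.map Complex.ofReal) (Q.map Complex.ofReal)
      (P.map Complex.ofReal) := by
  refine ⟨posSemidef_map_ofReal h.posSemidef, ?_⟩
  rw [riccatiMap, ← map_ofReal_riccatiGain h.posSemidef, ← map_ofReal_conjTranspose,
    ← map_ofReal_mul, ← map_ofReal_mul, ← map_ofReal_sub, ← map_ofReal_mul, ← map_ofReal_add]
  exact congrArg (·.map Complex.ofReal) h.riccatiMap_add

end Complexification

lemma gainK_eq_riccatiGain {n m : ℕ} (A : Matrix (Fin n) (Fin n) ℝ) (B : Matrix (Fin n) (Fin m) ℝ)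
    (P : Matrix (Fin n) (Fin n) ℝ) : gainK A B P = riccatiGain A B P := by
  simp only [gainK, riccatiGain, Matrix.conjTranspose_eq_transpose_of_trivial]

lemma IsDARESol.isRiccatiSolution {n m : ℕ} {A P : Matrix (Fin n) (Fin n) ℝ}
    {B : Matrix (Fin n) (Fin m) ℝ} {ε : ℝ} (h : IsDARESol A B ε P) :
    IsRiccatiSolution A B (ε • 1) P := by
  refine ⟨h.1.posSemidef, ?_⟩
  rw [riccatiMap, ← gainK_eq_riccatiGain, gainK, Matrix.conjTranspose_eq_transpose_of_trivial,
    ← sub_eq_zero, ← h.2, Matrix.mul_sub]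
  simp only [Matrix.mul_assoc]
  abel

/-- for every `ρ > 1/2` there exists `ε* > 0` such that `A − ρ B K_ε` is
Schur stable for all `ε ∈ (0, ε*]`. -/
theorem lowgain_closed_loop_schur {n m : ℕ}
    (A : Matrix (Fin n) (Fin n) ℝ) (B : Matrix (Fin n) (Fin m) ℝ)
    (hstab : Stabilizable A B) (hA : EigInClosedUnitDisc A)
    (P : ℝ → Matrix (Fin n) (Fin n) ℝ)
    (hP : ∀ ε > (0 : ℝ), IsDARESol A B ε (P ε))
    (ρ : ℝ) (hρ : 1 / 2 < ρ) :
    ∃ εstar > (0 : ℝ), ∀ ε ∈ Set.Ioc (0 : ℝ) εstar,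
      SchurStable (A - ρ • (B * gainK A B (P ε))) := by
  obtain ⟨F, hF⟩ := hstab
  rw [SchurStable, map_ofReal_sub, map_ofReal_mul] at hF
  have hpos : ∀ᶠ ε : ℝ in 𝓝[>] 0, 0 < ε := eventually_mem_nhdsWithin
  have hsol : ∀ᶠ ε : ℝ in 𝓝[>] 0, IsRiccatiSolution (A.map Complex.ofReal) (B.map Complex.ofReal)
      (ε • 1) ((P ε).map Complex.ofReal) := hpos.mono fun ε hε => by
    simpa only [map_ofReal_smul, map_ofReal_one] using
      (hP ε hε).isRiccatiSolution.map_ofReal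
  have hweight : ∀ᶠ ε : ℝ in 𝓝[>] 0, (ε • 1 : Matrix (Fin n) (Fin n) ℂ).PosDef :=
    hpos.mono fun ε hε => Matrix.PosDef.one.smul hε
  have hlim : Tendsto (fun ε : ℝ => (ε • 1 : Matrix (Fin n) (Fin n) ℂ)) (𝓝[>] 0) (𝓝 0) := by
    have hcont : Continuous fun ε : ℝ => (ε • 1 : Matrix (Fin n) (Fin n) ℂ) := by fun_prop
    exact (hcont.tendsto' 0 0 (zero_smul _ _)).mono_left nhdsWithin_le_nhds
  obtain ⟨εstar, hεstar, hstable⟩ := mem_nhdsGT_iff_exists_Ioc_subset.1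
    (lowgain_closed_loop_schur_general hA hF hsol hweight hlim hρ)
  refine ⟨εstar, hεstar, fun ε hε => ?_⟩
  rw [SchurStable, map_ofReal_sub, map_ofReal_smul, map_ofReal_mul, gainK_eq_riccatiGain,
    map_ofReal_riccatiGain (hP ε hε.1).1.posSemidef]
  exact hstable hε

end
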